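/- Define t_4 = e A_1 A_{−1} A_{−i} A_{−i} R³ and t_{m+1} = t_m A_1 R² for m ≥ 4. Then for every m ≥ 4, every integer ℓ > 0 and every d ∈ {1, −1, i, −i}: (1) t_m A_1 ∼ t_{m+1}; (2) t_m A_{−1} ≺ t_{m+1} and t_m A_i ≺ t_{m+1}; (3) t_m A_{−i} A_d ≺ t_{m+2}; (4) t_m A_0^ℓ A_d ≺ t_{m+1}. -/

import Mathlib

/-!
Each matrix involved acts on a row vector by an explicit formula, so everything reduces to linear
inequalities between the entries of `t_m`. Those entries have the shape
`t_m = (x, b, s, y, r, s, 0, 0, r)`, and `t ↦ t A_1 R²` sends the tuple `(x, b, y, s, r)` to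
`(x + 2 y + 2 s, s + y, x, y, s)`. The linear conditions collected in `TShape` (roughly
`2 s < y ≤ 2 s + 2 r`, while `b` and `x` agree with `r + s` and `y + 2 s + 2 r` up to one) hold
for `t_4` and are preserved by this step, so they hold for all `m ≥ 4` (`tvec_shape`).

For each of the comparisons a single permutation in `𝒫` works uniformly in `m`, and the required
entrywise inequalities follow from `TShape` by linear arithmetic. For the powers of `A_0` only
`ℓ = 1` and `ℓ = 2` matter, because `A_0^ℓ = A_0^2` for `ℓ ≥ 2`.
-/

open Matrix

noncomputable section

/-- The imaginary unit `i` in the Gaussian integers. -/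
def gI : GaussianInt := ⟨0, 1⟩

/-- The base `β = i - 1`. -/
def gβ : GaussianInt := ⟨-1, 1⟩

/-- The digit set `D = {0, 1, -1, i, -i}`. -/
def gD : Set GaussianInt := {0, 1, -1, gI, -gI}

/-- Value of a digit string `d_{n-1} ⋯ d_0`, given as a list with the least
significant digit first: `gval [d_0, d_1, …, d_{n-1}] = Σ d_j β^j`. -/
def gval (l : List GaussianInt) : GaussianInt :=
  l.foldr (fun d acc => d + gβ * acc) 0

/-- `l` (least significant digit first) is a `(β, D)`-representation of `x`. -/
def gIsRep (x : GaussianInt) (l : List GaussianInt) : Prop :=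
  (∀ d ∈ l, d ∈ gD) ∧ gval l = x

/-- A representation is normalized if it is empty or its leading digit
(the last entry of the LSD-first list) is nonzero. -/
def gNormalized (l : List GaussianInt) : Prop := l.getLast? ≠ some 0

/-- Number of nonzero digits (Hamming weight). -/
def gweight (l : List GaussianInt) : ℕ := (l.filter (fun d => d ≠ 0)).length

/-- The row vector `e = (1,0,0,0,0,0,0,0,0)`. -/
def e9 : Matrix (Fin 1) (Fin 9) ℤ := !![1,0,0,0,0,0,0,0,0]

/-- The permutation matrix `R = diag(1, P1, P1)`. -/
def R9 : Matrix (Fin 9) (Fin 9) ℤ :=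
  !![1,0,0,0,0,0,0,0,0;
     0,0,1,0,0,0,0,0,0;
     0,0,0,1,0,0,0,0,0;
     0,0,0,0,1,0,0,0,0;
     0,1,0,0,0,0,0,0,0;
     0,0,0,0,0,0,1,0,0;
     0,0,0,0,0,0,0,1,0;
     0,0,0,0,0,0,0,0,1;
     0,0,0,0,0,1,0,0,0]

/-- The matrix `A_1`. -/
def A1 : Matrix (Fin 9) (Fin 9) ℤ :=
  !![1,1,0,0,0,0,0,0,0;
     0,0,0,0,0,0,0,0,0;
     2,0,1,1,0,0,1,0,0;
     2,0,0,1,1,0,0,1,0;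
     0,0,0,0,0,0,0,0,0;
     0,0,0,0,0,0,0,0,0;
     1,0,0,1,0,0,0,0,0;
     0,0,0,0,0,0,0,0,0;
     0,0,0,0,0,0,0,0,0]

/-- The matrix `A_0`. -/
def A0 : Matrix (Fin 9) (Fin 9) ℤ :=
  !![1,0,0,0,0,0,0,0,0;
     0,0,0,0,0,0,1,0,0;
     0,0,0,0,0,0,0,1,0;
     0,0,0,0,0,0,0,0,1;
     0,0,0,0,0,1,0,0,0;
     0,0,0,0,0,0,0,0,0;
     0,0,0,0,0,0,0,0,0;
     0,0,0,0,0,0,0,0,0;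
     0,0,0,0,0,0,0,0,0]

/-- The matrix `A_i = Rᵀ A_1 R`. -/
def Ai : Matrix (Fin 9) (Fin 9) ℤ := R9ᵀ * A1 * R9

/-- The matrix `A_{-1} = Rᵀ A_i R`. -/
def Am1 : Matrix (Fin 9) (Fin 9) ℤ := R9ᵀ * Ai * R9

/-- The matrix `A_{-i} = Rᵀ A_{-1} R`. -/
def Ami : Matrix (Fin 9) (Fin 9) ℤ := R9ᵀ * Am1 * R9

/-- The matrix `A_d` associated with a digit `d ∈ D`. -/
def Amat (d : GaussianInt) : Matrix (Fin 9) (Fin 9) ℤ :=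
  if d = 0 then A0
  else if d = 1 then A1
  else if d = gI then Ai
  else if d = -1 then Am1
  else Ami

/-- The permutation matrix `C = diag(1, P2, P3)`. -/
def C9 : Matrix (Fin 9) (Fin 9) ℤ :=
  !![1,0,0,0,0,0,0,0,0;
     0,1,0,0,0,0,0,0,0;
     0,0,0,0,1,0,0,0,0;
     0,0,0,1,0,0,0,0,0;
     0,0,1,0,0,0,0,0,0;
     0,0,0,0,0,0,0,0,1;
     0,0,0,0,0,0,0,1,0;
     0,0,0,0,0,0,1,0,0;
     0,0,0,0,0,1,0,0,0]

/-- The group `𝒫 = {R^k, C R^k : k = 0,1,2,3}` of permutation matrices. -/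
def Pgrp : Set (Matrix (Fin 9) (Fin 9) ℤ) :=
  {M | ∃ k : Fin 4, M = R9 ^ (k : ℕ) ∨ M = C9 * R9 ^ (k : ℕ)}

/-- `u ≼ v` : `u` is majorised by `v`. -/
def gmaj (u v : Matrix (Fin 1) (Fin 9) ℤ) : Prop :=
  ∃ P ∈ Pgrp, ∀ j, (u * P) 0 j ≤ v 0 j

/-- `u ≺ v` : `u` is strictly majorised by `v`. -/
def gsmaj (u v : Matrix (Fin 1) (Fin 9) ℤ) : Prop :=
  ∃ P ∈ Pgrp, (∀ j, (u * P) 0 j ≤ v 0 j) ∧ (u * P) 0 0 < v 0 0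

/-- `u ∼ v` : `u ≼ v` and `v ≼ u`. -/
def geqv (u v : Matrix (Fin 1) (Fin 9) ℤ) : Prop := gmaj u v ∧ gmaj v u

/-- The row vectors `t_m` for `m ≥ 4`: `t_4 = e A_1 A_{-1} A_{-i} A_{-i} R³`
and `t_{m+1} = t_m A_1 R²`. -/
def tvec (m : ℕ) : Matrix (Fin 1) (Fin 9) ℤ :=
  e9 * (A1 * Am1 * Ami * Ami * R9 ^ 3) * (A1 * R9 ^ 2) ^ (m - 4)

/-! ### Action of the matrices on row vectors -/

lemma row_mul_R (a b c d e f g h i : ℤ) :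
    (!![a, b, c, d, e, f, g, h, i] : Matrix (Fin 1) (Fin 9) ℤ) * R9 =
      !![a, e, b, c, d, i, f, g, h] := by
  ext p q
  fin_cases p
  fin_cases q <;> simp [Matrix.mul_apply, Fin.sum_univ_succ, R9]

lemma row_mul_RT (a b c d e f g h i : ℤ) :
    (!![a, b, c, d, e, f, g, h, i] : Matrix (Fin 1) (Fin 9) ℤ) * R9ᵀ =
      !![a, c, d, e, b, g, h, i, f] := by
  ext p q
  fin_cases p
  fin_cases q <;> simp [Matrix.mul_apply, Fin.sum_univ_succ, R9]

lemma row_mul_C (a b c d e f g h i : ℤ) :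
    (!![a, b, c, d, e, f, g, h, i] : Matrix (Fin 1) (Fin 9) ℤ) * C9 =
      !![a, b, e, d, c, i, h, g, f] := by
  ext p q
  fin_cases p
  fin_cases q <;> simp [Matrix.mul_apply, Fin.sum_univ_succ, C9]

lemma row_mul_A1 (a b c d e f g h i : ℤ) :
    (!![a, b, c, d, e, f, g, h, i] : Matrix (Fin 1) (Fin 9) ℤ) * A1 =
      !![a + 2 * c + 2 * d + g, a, c, c + d + g, d, 0, c, d, 0] := by
  ext p q
  fin_cases p
  fin_cases q <;> simp [Matrix.mul_apply, Fin.sum_univ_succ, A1] <;> ring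

lemma row_mul_A0 (a b c d e f g h i : ℤ) :
    (!![a, b, c, d, e, f, g, h, i] : Matrix (Fin 1) (Fin 9) ℤ) * A0 =
      !![a, 0, 0, 0, 0, e, b, c, d] := by
  ext p q
  fin_cases p
  fin_cases q <;> simp [Matrix.mul_apply, Fin.sum_univ_succ, A0]

lemma row_mul_Ai (a b c d e f g h i : ℤ) :
    (!![a, b, c, d, e, f, g, h, i] : Matrix (Fin 1) (Fin 9) ℤ) * Ai =
      !![a + 2 * d + 2 * e + h, e, a, d, d + e + h, 0, 0, d, e] := by
  rw [Ai, ← Matrix.mul_assoc, ← Matrix.mul_assoc, row_mul_RT, row_mul_A1, row_mul_R]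

lemma row_mul_Am1 (a b c d e f g h i : ℤ) :
    (!![a, b, c, d, e, f, g, h, i] : Matrix (Fin 1) (Fin 9) ℤ) * Am1 =
      !![a + 2 * e + 2 * b + i, e + b + i, b, a, e, b, 0, 0, e] := by
  rw [Am1, ← Matrix.mul_assoc, ← Matrix.mul_assoc, row_mul_RT, row_mul_Ai, row_mul_R]

lemma row_mul_Ami (a b c d e f g h i : ℤ) :
    (!![a, b, c, d, e, f, g, h, i] : Matrix (Fin 1) (Fin 9) ℤ) * Ami =
      !![a + 2 * b + 2 * c + f, b, b + c + f, c, a, b, c, 0, 0] := by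
  rw [Ami, ← Matrix.mul_assoc, ← Matrix.mul_assoc, row_mul_RT, row_mul_Am1, row_mul_R]

lemma A0_pow_add_two (n : ℕ) : A0 ^ (n + 2) = A0 ^ 2 := by
  have h : A0 ^ 3 = A0 ^ 2 := by
    simp only [pow_succ, pow_zero, one_mul]
    decide
  induction n with
  | zero => rfl
  | succ k ih => rw [show k + 1 + 2 = (k + 2) + 1 by ring, pow_succ, ih, ← pow_succ, h]

lemma Amat_one : Amat 1 = A1 := by
  rw [Amat, if_neg (by decide), if_pos rfl]

lemma Amat_gI : Amat gI = Ai := by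
  rw [Amat, if_neg (by decide), if_neg (by decide), if_pos rfl]

lemma Amat_neg_one : Amat (-1) = Am1 := by
  rw [Amat, if_neg (by decide), if_neg (by decide), if_neg (by decide), if_pos rfl]

lemma Amat_neg_gI : Amat (-gI) = Ami := by
  rw [Amat, if_neg (by decide), if_neg (by decide), if_neg (by decide), if_neg (by decide)]

/-! ### Shape of the vectors `t_m` -/

/-- The linear conditions on `(x, b, y, s, r)` under which `t = (x, b, s, y, r, s, 0, 0, r)`
satisfies all the comparisons. The slack of one in the last two pairs of bounds is needed only
for `t_4`. -/
structure TShape (x b y s r : ℤ) : Prop where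
  r_pos : 1 ≤ r
  r_lt : 2 * r + 1 ≤ s
  lt_y : 2 * s + 1 ≤ y
  lt_x : 2 * y + 1 ≤ x
  y_le : y ≤ 2 * s + 2 * r
  le_b : r + s ≤ b
  b_le : b ≤ r + s + 1
  le_x : y + 2 * s + 2 * r ≤ x
  x_le : x ≤ y + 2 * s + 2 * r + 1

lemma tvec_succ (n : ℕ) : tvec (n + 4 + 1) = tvec (n + 4) * A1 * R9 * R9 := by
  rw [tvec, tvec, show n + 4 + 1 - 4 = n + 1 by lia, show n + 4 - 4 = n by lia,
    pow_succ (A1 * R9 ^ 2), pow_two]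
  simp only [← Matrix.mul_assoc]

lemma shape_step (x b y s r : ℤ) :
    (!![x, b, s, y, r, s, 0, 0, r] : Matrix (Fin 1) (Fin 9) ℤ) * A1 * R9 * R9 =
      !![x + 2 * y + 2 * s, s + y, y, x, s, y, 0, 0, s] := by
  rw [row_mul_A1, row_mul_R, row_mul_R]
  congr! 3 <;> ring_nf

lemma tvec_shape (n : ℕ) : ∃ x b y s r : ℤ, TShape x b y s r ∧
    tvec (n + 4) = !![x, b, s, y, r, s, 0, 0, r] := by
  induction n with
  | zero =>
    refine ⟨17, 5, 8, 3, 1, by constructor <;> norm_num, ?_⟩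
    simp only [tvec, e9, ← Matrix.mul_assoc, pow_succ, pow_zero, one_mul, Nat.sub_self, zero_add,
      Matrix.mul_one, row_mul_A1, row_mul_Am1, row_mul_Ami, row_mul_R]
    norm_num
  | succ k ih =>
    obtain ⟨x, b, y, s, r, ⟨h1, h2, h3, h4, h5, h6, h7, h8, h9⟩, ht⟩ := ih
    refine ⟨x + 2 * y + 2 * s, s + y, x, y, s, by constructor <;> lia, ?_⟩
    rw [show k + 1 + 4 = k + 4 + 1 by ring, tvec_succ, ht, shape_step]

/-! ### Majorisation -/

lemma R_pow_mem (k : ℕ) (hk : k < 4) : R9 ^ k ∈ Pgrp := ⟨⟨k, hk⟩, Or.inl rfl⟩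

lemma CR_pow_mem (k : ℕ) (hk : k < 4) : C9 * R9 ^ k ∈ Pgrp := ⟨⟨k, hk⟩, Or.inr rfl⟩

lemma gsmaj_Am1 {x b y s r : ℤ} (ht : TShape x b y s r) :
    gsmaj ((!![x, b, s, y, r, s, 0, 0, r] : Matrix (Fin 1) (Fin 9) ℤ) * Am1)
      !![x + 2 * y + 2 * s, s + y, y, x, s, y, 0, 0, s] := by
  obtain ⟨h1, h2, h3, h4, h5, h6, h7, h8, h9⟩ := ht
  refine ⟨_, R_pow_mem 0 (by norm_num), ?_⟩
  simp only [pow_zero, Matrix.mul_one, row_mul_Am1]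
  refine ⟨fun j => ?_, ?_⟩
  · fin_cases j <;> simp <;> lia
  · simp
    lia

lemma gsmaj_Ai {x b y s r : ℤ} (ht : TShape x b y s r) :
    gsmaj ((!![x, b, s, y, r, s, 0, 0, r] : Matrix (Fin 1) (Fin 9) ℤ) * Ai)
      !![x + 2 * y + 2 * s, s + y, y, x, s, y, 0, 0, s] := by
  obtain ⟨h1, h2, h3, h4, h5, h6, h7, h8, h9⟩ := ht
  refine ⟨_, CR_pow_mem 3 (by norm_num), ?_⟩
  simp only [pow_three', ← Matrix.mul_assoc, row_mul_Ai, row_mul_C, row_mul_R]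
  refine ⟨fun j => ?_, ?_⟩
  · fin_cases j <;> simp <;> lia
  · simp
    lia

lemma gsmaj_Ami_one {x b y s r : ℤ} (ht : TShape x b y s r) :
    gsmaj ((!![x, b, s, y, r, s, 0, 0, r] : Matrix (Fin 1) (Fin 9) ℤ) * (Ami * A1))
      !![x + 2 * y + 2 * s + 2 * x + 2 * y, y + x, x, x + 2 * y + 2 * s, y, x, 0, 0, y] := by
  obtain ⟨h1, h2, h3, h4, h5, h6, h7, h8, h9⟩ := ht
  refine ⟨_, CR_pow_mem 2 (by norm_num), ?_⟩
  simp only [pow_two, ← Matrix.mul_assoc, row_mul_Ami, row_mul_A1, row_mul_C, row_mul_R]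
  refine ⟨fun j => ?_, ?_⟩
  · fin_cases j <;> simp <;> lia
  · simp
    lia

lemma gsmaj_Ami_I {x b y s r : ℤ} (ht : TShape x b y s r) :
    gsmaj ((!![x, b, s, y, r, s, 0, 0, r] : Matrix (Fin 1) (Fin 9) ℤ) * (Ami * Ai))
      !![x + 2 * y + 2 * s + 2 * x + 2 * y, y + x, x, x + 2 * y + 2 * s, y, x, 0, 0, y] := by
  obtain ⟨h1, h2, h3, h4, h5, h6, h7, h8, h9⟩ := ht
  refine ⟨_, R_pow_mem 1 (by norm_num), ?_⟩
  simp only [pow_one, ← Matrix.mul_assoc, row_mul_Ami, row_mul_Ai, row_mul_R]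
  refine ⟨fun j => ?_, ?_⟩
  · fin_cases j <;> simp <;> lia
  · simp
    lia

lemma gsmaj_Ami_neg_one {x b y s r : ℤ} (ht : TShape x b y s r) :
    gsmaj ((!![x, b, s, y, r, s, 0, 0, r] : Matrix (Fin 1) (Fin 9) ℤ) * (Ami * Am1))
      !![x + 2 * y + 2 * s + 2 * x + 2 * y, y + x, x, x + 2 * y + 2 * s, y, x, 0, 0, y] := by
  obtain ⟨h1, h2, h3, h4, h5, h6, h7, h8, h9⟩ := ht
  refine ⟨_, CR_pow_mem 0 (by norm_num), ?_⟩
  simp only [pow_zero, Matrix.mul_one, ← Matrix.mul_assoc, row_mul_Ami, row_mul_Am1, row_mul_C]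
  refine ⟨fun j => ?_, ?_⟩
  · fin_cases j <;> simp <;> lia
  · simp
    lia

lemma gsmaj_Ami_neg_I {x b y s r : ℤ} (ht : TShape x b y s r) :
    gsmaj ((!![x, b, s, y, r, s, 0, 0, r] : Matrix (Fin 1) (Fin 9) ℤ) * (Ami * Ami))
      !![x + 2 * y + 2 * s + 2 * x + 2 * y, y + x, x, x + 2 * y + 2 * s, y, x, 0, 0, y] := by
  obtain ⟨h1, h2, h3, h4, h5, h6, h7, h8, h9⟩ := ht
  refine ⟨_, R_pow_mem 3 (by norm_num), ?_⟩
  simp only [pow_three', ← Matrix.mul_assoc, row_mul_Ami, row_mul_Ami, row_mul_R]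
  refine ⟨fun j => ?_, ?_⟩
  · fin_cases j <;> simp <;> lia
  · simp
    lia

/-! Both `t_m A_0` and `t_m A_0^2` have the form `(x, 0, 0, 0, 0, f, g, h, i)` with
`f, g, h, i ≤ y`, and this is all that comparing `t_m A_0^ℓ A_d` with `t_{m+1}` requires. -/

lemma gsmaj_A0_one {x b y s r f g h i : ℤ} (ht : TShape x b y s r)
    (hg : g ≤ y) :
    gsmaj ((!![x, 0, 0, 0, 0, f, g, h, i] : Matrix (Fin 1) (Fin 9) ℤ) * A1)
      !![x + 2 * y + 2 * s, s + y, y, x, s, y, 0, 0, s] := by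
  obtain ⟨h1, h2, h3, h4, h5, h6, h7, h8, h9⟩ := ht
  refine ⟨_, R_pow_mem 2 (by norm_num), ?_⟩
  simp only [pow_two, ← Matrix.mul_assoc, row_mul_A1, row_mul_R]
  refine ⟨fun j => ?_, ?_⟩
  · fin_cases j <;> simp <;> lia
  · simp
    lia

lemma gsmaj_A0_I {x b y s r f g h i : ℤ} (ht : TShape x b y s r)
    (hh : h ≤ y) :
    gsmaj ((!![x, 0, 0, 0, 0, f, g, h, i] : Matrix (Fin 1) (Fin 9) ℤ) * Ai)
      !![x + 2 * y + 2 * s, s + y, y, x, s, y, 0, 0, s] := by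
  obtain ⟨h1, h2, h3, h4, h5, h6, h7, h8, h9⟩ := ht
  refine ⟨_, R_pow_mem 1 (by norm_num), ?_⟩
  simp only [pow_one, row_mul_Ai, row_mul_R]
  refine ⟨fun j => ?_, ?_⟩
  · fin_cases j <;> simp <;> lia
  · simp
    lia

lemma gsmaj_A0_neg_one {x b y s r f g h i : ℤ} (ht : TShape x b y s r)
    (hi : i ≤ y) :
    gsmaj ((!![x, 0, 0, 0, 0, f, g, h, i] : Matrix (Fin 1) (Fin 9) ℤ) * Am1)
      !![x + 2 * y + 2 * s, s + y, y, x, s, y, 0, 0, s] := by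
  obtain ⟨h1, h2, h3, h4, h5, h6, h7, h8, h9⟩ := ht
  refine ⟨_, R_pow_mem 0 (by norm_num), ?_⟩
  simp only [pow_zero, Matrix.mul_one, row_mul_Am1]
  refine ⟨fun j => ?_, ?_⟩
  · fin_cases j <;> simp <;> lia
  · simp
    lia

lemma gsmaj_A0_neg_I {x b y s r f g h i : ℤ} (ht : TShape x b y s r)
    (hf : f ≤ y) :
    gsmaj ((!![x, 0, 0, 0, 0, f, g, h, i] : Matrix (Fin 1) (Fin 9) ℤ) * Ami)
      !![x + 2 * y + 2 * s, s + y, y, x, s, y, 0, 0, s] := by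
  obtain ⟨h1, h2, h3, h4, h5, h6, h7, h8, h9⟩ := ht
  refine ⟨_, R_pow_mem 3 (by norm_num), ?_⟩
  simp only [pow_three', ← Matrix.mul_assoc, row_mul_Ami, row_mul_R]
  refine ⟨fun j => ?_, ?_⟩
  · fin_cases j <;> simp <;> lia
  · simp
    lia

/-- Majorisation relations for the vectors `t_m`. -/
theorem stmt12 (m : ℕ) (hm : 4 ≤ m) (ℓ : ℕ) (hℓ : 0 < ℓ)
    (d : GaussianInt) (hd : d ∈ ({1, -1, gI, -gI} : Set GaussianInt)) :
    geqv (tvec m * A1) (tvec (m + 1)) ∧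
    gsmaj (tvec m * Am1) (tvec (m + 1)) ∧
    gsmaj (tvec m * Ai) (tvec (m + 1)) ∧
    gsmaj (tvec m * Ami * Amat d) (tvec (m + 2)) ∧
    gsmaj (tvec m * A0 ^ ℓ * Amat d) (tvec (m + 1)) := by
  obtain ⟨n, rfl⟩ : ∃ n, m = n + 4 := ⟨m - 4, by lia⟩
  have hstep := tvec_succ n
  have hstep' := tvec_succ (n + 1)
  rw [show n + 1 + 4 = n + 4 + 1 by ring] at hstep'
  obtain ⟨x, b, y, s, r, ht, hv⟩ := tvec_shape n
  refine ⟨⟨⟨_, R_pow_mem 2 (by norm_num), fun j => le_of_eq ?_⟩,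
    ⟨_, R_pow_mem 2 (by norm_num), fun j => le_of_eq ?_⟩⟩, ?_⟩
  · rw [hstep, pow_two, ← Matrix.mul_assoc]
  -- `R` has order four, so `R²` undoes itself.
  · have hR : R9 * R9 * (R9 * R9) = 1 := by decide
    rw [hstep, Matrix.mul_assoc (_ * A1), Matrix.mul_assoc (_ * A1),
      pow_two, hR, Matrix.mul_one]
  rw [hv, shape_step] at hstep
  rw [show n + 4 + 1 + 1 = n + 4 + 2 by ring, hstep, shape_step] at hstep'
  rw [hstep, hstep', hv]
  refine ⟨gsmaj_Am1 ht, gsmaj_Ai ht, ?_⟩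
  have hA0 : ∃ f g h i : ℤ, f ≤ y ∧ g ≤ y ∧ h ≤ y ∧ i ≤ y ∧
      (!![x, b, s, y, r, s, 0, 0, r] : Matrix (Fin 1) (Fin 9) ℤ) * A0 ^ ℓ =
        !![x, 0, 0, 0, 0, f, g, h, i] := by
    obtain ⟨h1, h2, h3, h4, h5, h6, h7, h8, h9⟩ := ht
    obtain rfl | hl : ℓ = 1 ∨ 2 ≤ ℓ := by lia
    · exact ⟨r, b, s, y, by lia, by lia, by lia, le_rfl, by rw [pow_one, row_mul_A0]⟩
    · obtain ⟨k, rfl⟩ := Nat.exists_eq_add_of_le' hl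
      refine ⟨0, 0, 0, 0, by lia, by lia, by lia, by lia, ?_⟩
      rw [A0_pow_add_two, pow_two, ← Matrix.mul_assoc, row_mul_A0, row_mul_A0]
  obtain ⟨f, g, h, i, hf, hg, hh, hi, hA0⟩ := hA0
  rw [hA0, Matrix.mul_assoc]
  rcases hd with rfl | rfl | rfl | rfl
  · rw [Amat_one]
    exact ⟨gsmaj_Ami_one ht, gsmaj_A0_one ht hg⟩
  · rw [Amat_neg_one]
    exact ⟨gsmaj_Ami_neg_one ht, gsmaj_A0_neg_one ht hi⟩
  · rw [Amat_gI]
    exact ⟨gsmaj_Ami_I ht, gsmaj_A0_I ht hh⟩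
  · rw [Amat_neg_gI]
    exact ⟨gsmaj_Ami_neg_I ht, gsmaj_A0_neg_I ht hf⟩
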